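/- Fair model checking characterization for initialized formulas: let L be an LTS in which every state is reachable from s_init, let φ ∈ L⁺(F_p^∞), and let μ_L be the fair-coin measure of L. Then there exists k ∈ ℕ with μ_L({ρ : (ρ,k) ⊨ F φ}) = 1 if and only if for every BSCC B of L, every run ρ with ρ 0 ∈ B satisfies (ρ, |S| + 1) ⊨ φ. -/

import Mathlib

open scoped Classical
open MeasureTheory

/-- A labelled transition system: a finite set of states `S`, an initial state,
a transition relation in which every state has at least one successor, and a
labeling of states by sets of atomic propositions. -/
structure LTS (S AP : Type) where
  init : S
  T : S → S → Prop
  lbl : S → Set AP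
  succ_nonempty : ∀ s : S, ∃ t : S, T s t

variable {S AP : Type}

/-- A run of an LTS: an infinite sequence of states following the transitions. -/
def IsRun (L : LTS S AP) (ρ : ℕ → S) : Prop := ∀ i : ℕ, L.T (ρ i) (ρ (i + 1))

/-- The shifted run `ρ[i..]`. -/
def shift (ρ : ℕ → S) (i : ℕ) : ℕ → S := fun n => ρ (n + i)

/-- Formulas of the prompt Muller fragment `L(F_p^∞)`:
`φ ::= α | ¬α | φ ∨ φ | φ ∧ φ | F_p^∞ φ`. -/
inductive PM (AP : Type) : Type where
  | pos : AP → PM AP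
  | neg : AP → PM AP
  | or : PM AP → PM AP → PM AP
  | and : PM AP → PM AP → PM AP
  | finf : PM AP → PM AP

/-- Satisfaction `(ρ, k) ⊨ φ` of a prompt Muller formula by a run at bound `k`. -/
def Sat (L : LTS S AP) : PM AP → (ℕ → S) → ℕ → Prop
  | .pos a, ρ, _ => a ∈ L.lbl (ρ 0)
  | .neg a, ρ, _ => a ∉ L.lbl (ρ 0)
  | .or φ ψ, ρ, k => Sat L φ ρ k ∨ Sat L ψ ρ k
  | .and φ ψ, ρ, k => Sat L φ ρ k ∧ Sat L ψ ρ k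
  | .finf φ, ρ, k => ∀ i : ℕ, ∃ j ≤ k, Sat L φ (shift ρ (i + j)) k

/-- The positive fragment `L⁺(F_p^∞)`: the smallest set of formulas containing
`F_p^∞ φ` for every formula `φ` and closed under `∨`, `∧` and `F_p^∞`. -/
inductive Positive {AP : Type} : PM AP → Prop where
  | finf (φ : PM AP) : Positive (.finf φ)
  | or {φ ψ : PM AP} : Positive φ → Positive ψ → Positive (.or φ ψ)
  | and {φ ψ : PM AP} : Positive φ → Positive ψ → Positive (.and φ ψ)

/-- Satisfaction `(ρ, k) ⊨ F ψ`: some suffix of `ρ` satisfies `ψ` at bound `k`. -/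
def SatF (L : LTS S AP) (ψ : PM AP) (ρ : ℕ → S) (k : ℕ) : Prop :=
  ∃ i : ℕ, Sat L ψ (shift ρ i) k

/-- Reachability along transitions. -/
def Reachable (L : LTS S AP) : S → S → Prop := Relation.ReflTransGen L.T

/-- A strongly connected component: an equivalence class of mutual reachability. -/
def IsSCC (L : LTS S AP) (C : Set S) : Prop :=
  ∃ s : S, C = {t : S | Reachable L s t ∧ Reachable L t s}

/-- A bottom strongly connected component: an SCC closed under transitions. -/
def IsBSCC (L : LTS S AP) (C : Set S) : Prop :=
  IsSCC L C ∧ ∀ s ∈ C, ∀ t : S, L.T s t → t ∈ C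

/-- The probability of one fair-coin step from `s` to `t`: the successor is chosen
uniformly at random among the successors of `s`. -/
noncomputable def stepProb (L : LTS S AP) (s t : S) : ENNReal :=
  if L.T s t then ((Nat.card {u : S // L.T s u} : ENNReal))⁻¹ else 0

/-- The product of the step probabilities along a finite sequence of states. -/
noncomputable def chainProb (L : LTS S AP) : List S → ENNReal
  | [] => 1
  | [_] => 1
  | s :: t :: rest => stepProb L s t * chainProb L (t :: rest)

/-- The cylinder `Cyl w` of infinite sequences extending the finite word `w`. -/
def Cyl (w : List S) : Set (ℕ → S) := {ρ | ∀ i : Fin w.length, ρ i = w.get i}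

/-- The fair-coin probability of the cylinder of a finite word: `1` on the initial
state, then the product of the uniform step probabilities. -/
noncomputable def pathProb (L : LTS S AP) (w : List S) : ENNReal :=
  (if w.head? = some L.init then 1 else 0) * chainProb L w

/-- `μ` is the fair-coin measure of `L`: the trajectory (Ionescu–Tulcea) law of the
Markov chain started at `L.init` that moves from each state to a uniformly chosen
successor; it is the unique probability measure on `S^ℕ` (product σ-algebra, `S`
discrete) giving every nonempty cylinder its path probability. -/
def IsFairMeasure [MeasurableSpace S] (L : LTS S AP) (μ : Measure (ℕ → S)) : Prop :=
  IsProbabilityMeasure μ ∧ ∀ w : List S, w ≠ [] → μ (Cyl w) = pathProb L w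

/-!
Call a run fair if it traverses infinitely often every finite path that starts in a state it visits
infinitely often. Almost every run is fair: by Lévy's conditional Borel–Cantelli lemma, a path
traversed infinitely often is almost surely prolonged infinitely often by each of its possible next
steps. The states a fair run visits infinitely often form a BSCC `B`.

Prompt satisfaction at bound `k` along a fair run already forces satisfaction along every run inside
`B`, since the fair run imitates the first `k` steps of any such run at arbitrarily late times. So
it only depends on `B`, and no longer on the bound: if a state with some property is met by every
run inside `B`, then by the pigeonhole principle it is met before a state is repeated.
-/

open Filter

/-! ### Runs and bottom components -/

protected theorem IsRun.shift {L : LTS S AP} {ρ : ℕ → S} (h : IsRun L ρ) (i : ℕ) :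
    IsRun L (shift ρ i) := fun n => by
  simpa only [_root_.shift, Nat.add_right_comm] using h (n + i)

theorem IsRun.reachable {L : LTS S AP} {ρ : ℕ → S} (h : IsRun L ρ) {m n : ℕ} (hmn : m ≤ n) :
    Reachable L (ρ m) (ρ n) := by
  induction n, hmn using Nat.le_induction with
  | base => exact .refl
  | succ n _ ih => exact ih.tail (h n)

theorem IsRun.loop {L : LTS S AP} {ρ : ℕ → S} (h : IsRun L ρ) {a m : ℕ} (hm : 0 < m)
    (heq : ρ (a + m) = ρ a) : IsRun L fun n => ρ (a + n % m) := by
  intro n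
  have hstep := h (a + n % m)
  rw [add_assoc] at hstep
  dsimp only
  rw [← Nat.mod_add_mod]
  obtain hlt | hlast : n % m + 1 < m ∨ n % m + 1 = m := Nat.succ_le_iff.2 (n.mod_lt hm) |>.lt_or_eq
  · rwa [Nat.mod_eq_of_lt hlt]
  · rw [hlast, heq] at hstep
    simpa only [hlast, Nat.mod_self, add_zero] using hstep

theorem exists_isRun (L : LTS S AP) (s : S) : ∃ ρ, IsRun L ρ ∧ ρ 0 = s := by
  choose next hnext using L.succ_nonempty
  refine ⟨fun n => next^[n] s, fun n => ?_, rfl⟩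
  simpa only [Function.iterate_succ_apply'] using hnext _

theorem Reachable.exists_isRun {L : LTS S AP} {s t : S} (h : Reachable L s t) :
    ∃ ρ n, IsRun L ρ ∧ ρ 0 = s ∧ ρ n = t := by
  induction h using Relation.ReflTransGen.head_induction_on with
  | refl =>
    obtain ⟨ρ, hρ, h0⟩ := _root_.exists_isRun L t
    exact ⟨ρ, 0, hρ, h0, h0⟩
  | @head s u hsu _ ih =>
    obtain ⟨ρ, n, hρ, rfl, rfl⟩ := ih
    refine ⟨fun i => Nat.casesOn i s ρ, n + 1, fun i => ?_, rfl, rfl⟩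
    cases i with
    | zero => exact hsu
    | succ i => exact hρ i

theorem IsBSCC.reachable {L : LTS S AP} {B : Set S} (hB : IsBSCC L B) {s t : S} (hs : s ∈ B)
    (ht : t ∈ B) : Reachable L s t := by
  obtain ⟨⟨b, rfl⟩, -⟩ := hB
  exact hs.2.trans ht.1

theorem IsBSCC.mem_of_reachable {L : LTS S AP} {B : Set S} (hB : IsBSCC L B) {s t : S}
    (hs : s ∈ B) (h : Reachable L s t) : t ∈ B := by
  induction h with
  | refl => exact hs
  | tail _ hT ih => exact hB.2 _ ih _ hT

/-! ### Fair runs -/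

/-- The set `inf(ρ)` of states that `ρ` visits infinitely often. -/
def infSet (ρ : ℕ → S) : Set S := {s | ∃ᶠ n in atTop, ρ n = s}

theorem infSet_nonempty [Finite S] (ρ : ℕ → S) : (infSet ρ).Nonempty :=
  frequently_exists.1 <| Frequently.of_forall fun n => ⟨ρ n, rfl⟩

/-- Fairness with respect to finite paths: every finite path of `L` (given as an initial segment
of a run `π`) that starts in a state visited infinitely often by `ρ` is traversed infinitely often
by `ρ`. -/
def IsFair (L : LTS S AP) (ρ : ℕ → S) : Prop :=
  ∀ π : ℕ → S, IsRun L π → π 0 ∈ infSet ρ → ∀ k, ∃ᶠ n in atTop, ∀ j ≤ k, ρ (n + j) = π j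

theorem IsFair.mem_infSet_of_reachable {L : LTS S AP} {ρ : ℕ → S} (hf : IsFair L ρ) {s t : S}
    (hs : s ∈ infSet ρ) (h : Reachable L s t) : t ∈ infSet ρ := by
  obtain ⟨π, k, hπ, rfl, rfl⟩ := h.exists_isRun
  exact (tendsto_add_atTop_nat k).frequently ((hf π hπ hs k).mono fun n hn => hn k le_rfl)

theorem IsRun.reachable_of_mem_infSet {L : LTS S AP} {ρ : ℕ → S} (hρ : IsRun L ρ) {s : S}
    (hs : s ∈ infSet ρ) (m : ℕ) : Reachable L (ρ m) s := by
  obtain ⟨n, rfl, hmn⟩ := (hs.and_eventually (eventually_ge_atTop m)).exists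
  exact hρ.reachable hmn

theorem IsFair.isBSCC_infSet [Finite S] {L : LTS S AP} {ρ : ℕ → S} (hf : IsFair L ρ)
    (hρ : IsRun L ρ) : IsBSCC L (infSet ρ) := by
  obtain ⟨s, hs⟩ := infSet_nonempty ρ
  refine ⟨⟨s, Set.ext fun t => ⟨fun ht => ?_, fun ht => hf.mem_infSet_of_reachable hs ht.1⟩⟩,
    fun t ht u hu => hf.mem_infSet_of_reachable ht (.single hu)⟩
  obtain ⟨m, rfl⟩ := hs.exists
  obtain ⟨n, rfl⟩ := ht.exists
  exact ⟨hρ.reachable_of_mem_infSet ht m, hρ.reachable_of_mem_infSet hs n⟩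

theorem IsFair.subset_infSet_of_isBSCC [Finite S] {L : LTS S AP} {ρ : ℕ → S} (hf : IsFair L ρ)
    (hρ : IsRun L ρ) {B : Set S} (hB : IsBSCC L B) {n : ℕ} (hn : ρ n ∈ B) : B ⊆ infSet ρ := by
  obtain ⟨s, hs⟩ := infSet_nonempty ρ
  have hsB : s ∈ B := hB.mem_of_reachable hn (hρ.reachable_of_mem_infSet hs n)
  exact fun t ht => hf.mem_infSet_of_reachable hs (hB.reachable hsB ht)

/-! ### Satisfaction inside a set of states -/

/-- Satisfaction of a formula at a state of `B`, independently of any bound or run: `F_p^∞ φ` is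
read as "every run inside `B` meets a state satisfying `φ`". -/
def SatIn (L : LTS S AP) (B : Set S) : PM AP → S → Prop
  | .pos a, s => a ∈ L.lbl s
  | .neg a, s => a ∉ L.lbl s
  | .or φ ψ, s => SatIn L B φ s ∨ SatIn L B ψ s
  | .and φ ψ, s => SatIn L B φ s ∧ SatIn L B ψ s
  | .finf φ, _ => ∀ π : ℕ → S, IsRun L π → (∀ i, π i ∈ B) → ∃ i, SatIn L B φ (π i)

theorem Positive.satIn_congr {φ : PM AP} (hφ : Positive φ) (L : LTS S AP) (B : Set S) (s t : S) :
    SatIn L B φ s ↔ SatIn L B φ t := by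
  induction hφ with
  | finf φ => exact Iff.rfl
  | or _ _ ih₁ ih₂ => exact or_congr ih₁ ih₂
  | and _ _ ih₁ ih₂ => exact and_congr ih₁ ih₂

-- Pigeonhole: a run that avoids `Q` for `|B|` steps contains a cycle avoiding `Q` forever.
theorem IsRun.exists_le_of_forall_run_exists {L : LTS S AP} {B : Set S} (hB : B.Finite) {k : ℕ}
    (hk : B.ncard ≤ k + 1) {Q : S → Prop}
    (hQ : ∀ π : ℕ → S, IsRun L π → (∀ i, π i ∈ B) → ∃ i, Q (π i))
    {ρ : ℕ → S} (hρ : IsRun L ρ) (hρB : ∀ i, ρ i ∈ B) : ∃ j ≤ k, Q (ρ j) := by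
  have hcard : B.ncard < (Set.Iic (k + 1)).ncard := by
    simpa [Set.ncard_eq_toFinset_card'] using Nat.lt_succ_of_le hk
  obtain ⟨a, b, hb, hab, heq⟩ : ∃ a b, b ≤ k + 1 ∧ a < b ∧ ρ b = ρ a := by
    obtain ⟨a, ha, b, hb, hne, heq⟩ :=
      Set.exists_ne_map_eq_of_ncard_lt_of_maps_to hcard (fun i _ => hρB i) hB
    obtain hlt | hlt := hne.lt_or_gt
    exacts [⟨a, b, hb, hlt, heq.symm⟩, ⟨b, a, ha, hlt, heq⟩]
  have hm : 0 < b - a := Nat.sub_pos_of_lt hab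
  obtain ⟨i, hi⟩ := hQ _ (hρ.loop hm (by rwa [Nat.add_sub_cancel' hab.le])) fun _ => hρB _
  have := Nat.mod_lt i hm
  exact ⟨a + i % (b - a), by omega, hi⟩

theorem SatIn.sat {L : LTS S AP} {B : Set S} (hB : B.Finite) {k : ℕ} (hk : B.ncard ≤ k + 1)
    {φ : PM AP} {ρ : ℕ → S} (hρ : IsRun L ρ) (hρB : ∀ i, ρ i ∈ B) (h : SatIn L B φ (ρ 0)) :
    Sat L φ ρ k := by
  induction φ generalizing ρ with
  | pos a => exact h
  | neg a => exact h
  | or φ ψ ih₁ ih₂ => exact h.imp (ih₁ hρ hρB) (ih₂ hρ hρB)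
  | and φ ψ ih₁ ih₂ => exact ⟨ih₁ hρ hρB h.1, ih₂ hρ hρB h.2⟩
  | finf φ ih =>
    intro i
    obtain ⟨j, hj, hsat⟩ :=
      (hρ.shift i).exists_le_of_forall_run_exists hB hk h fun _ => hρB _
    refine ⟨j, hj, ih (hρ.shift _) (fun _ => hρB _) ?_⟩
    simpa only [shift, zero_add, add_comm j i] using hsat

theorem shift_shift (ρ : ℕ → S) (i j : ℕ) : shift (shift ρ i) j = shift ρ (i + j) := by
  funext n
  simp only [shift, add_comm i j, add_assoc]

-- `ρ` imitates the first `k` steps of every run inside `B` at some late time, where its promptness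
-- forces `φ` within these `k` steps.
theorem IsFair.satIn {L : LTS S AP} {B : Set S} {ρ : ℕ → S} (hf : IsFair L ρ)
    (hB : B ⊆ infSet ρ) {φ : PM AP} {i k : ℕ} (h : Sat L φ (shift ρ i) k) :
    SatIn L B φ (ρ i) := by
  induction φ generalizing i with
  | pos a => simpa only [Sat, SatIn, shift, zero_add] using h
  | neg a => simpa only [Sat, SatIn, shift, zero_add] using h
  | or φ ψ ih₁ ih₂ => exact h.imp ih₁ ih₂
  | and φ ψ ih₁ ih₂ => exact ⟨ih₁ h.1, ih₂ h.2⟩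
  | finf φ ih =>
    intro π hπ hπB
    obtain ⟨n, hn, hin⟩ :=
      ((hf π hπ (hB (hπB 0)) k).and_eventually (eventually_ge_atTop i)).exists
    obtain ⟨j, hj, hsat⟩ := h (n - i)
    rw [shift_shift, ← add_assoc, Nat.add_sub_cancel' hin] at hsat
    exact ⟨j, hn j hj ▸ ih hsat⟩

theorem Positive.sat_of_satF [Finite S] {L : LTS S AP} {φ : PM AP} (hφ : Positive φ) {ρ : ℕ → S}
    (hρ : IsRun L ρ) (hf : IsFair L ρ) {k : ℕ} (h : SatF L φ ρ k) {B : Set S} (hB : IsBSCC L B)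
    {n : ℕ} (hn : ρ n ∈ B) {π : ℕ → S} (hπ : IsRun L π) (hπB : π 0 ∈ B) {K : ℕ}
    (hK : Nat.card S ≤ K + 1) : Sat L φ π K := by
  obtain ⟨i, hi⟩ := h
  have hsat : SatIn L B φ (ρ i) := hf.satIn (hf.subset_infSet_of_isBSCC hρ hB hn) hi
  exact ((hφ.satIn_congr L B _ _).1 hsat).sat B.toFinite ((Set.ncard_le_card B).trans hK) hπ
    fun j => hB.mem_of_reachable hπB (hπ.reachable j.zero_le)

theorem IsFair.satF [Finite S] {L : LTS S AP} {φ : PM AP} {ρ : ℕ → S} (hf : IsFair L ρ)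
    (hρ : IsRun L ρ) {k : ℕ}
    (h : ∀ B : Set S, IsBSCC L B → ∀ π : ℕ → S, IsRun L π → π 0 ∈ B → Sat L φ π k) :
    SatF L φ ρ k := by
  obtain ⟨s, hs⟩ := infSet_nonempty ρ
  obtain ⟨n, hn⟩ := hs.exists
  exact ⟨n, h _ (hf.isBSCC_infSet hρ) _ (hρ.shift n) (by simpa only [shift, zero_add, hn])⟩

theorem measurable_sat [MeasurableSpace S] [DiscreteMeasurableSpace S] (L : LTS S AP) (φ : PM AP)
    (i k : ℕ) : Measurable fun ρ : ℕ → S => Sat L φ (shift ρ i) k := by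
  induction φ generalizing i with
  | pos a => exact (Measurable.of_discrete (f := (a ∈ L.lbl ·))).comp (measurable_pi_apply (0 + i))
  | neg a => exact (Measurable.of_discrete (f := (a ∉ L.lbl ·))).comp (measurable_pi_apply (0 + i))
  | or φ ψ ih₁ ih₂ => exact (ih₁ i).or (ih₂ i)
  | and φ ψ ih₁ ih₂ => exact (ih₁ i).and (ih₂ i)
  | finf φ ih =>
    simp only [Sat, shift_shift]
    exact .forall fun m => .exists fun j => measurable_const.and (ih _)

theorem measurable_satF [MeasurableSpace S] [DiscreteMeasurableSpace S] (L : LTS S AP) (φ : PM AP)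
    (k : ℕ) : Measurable fun ρ : ℕ → S => SatF L φ ρ k :=
  .exists fun i => measurable_sat L φ i k

/-! ### Laws of Markov chains -/

/-- `μ` is the law on `S^ℕ` of the Markov chain with transition probabilities `p` started at `s₀`,
characterized by its values on the cylinders `{ρ | ρ 0 = π 0, …, ρ n = π n}`. -/
structure IsMarkovLaw [MeasurableSpace S] (p : S → PMF S) (s₀ : S) (μ : Measure (ℕ → S)) :
    Prop where
  isProbabilityMeasure : IsProbabilityMeasure μ
  measure_cylinder (π : ℕ → S) (n : ℕ) : μ {ρ | ∀ i ≤ n, ρ i = π i} =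
    (if π 0 = s₀ then 1 else 0) * ∏ i ∈ Finset.range n, p (π i) (π (i + 1))

/-- The canonical filtration of `S^ℕ`: the events at time `n` depend on the states up to time `n`
only. -/
abbrev pathFiltration (S : Type) [MeasurableSpace S] :
    Filtration ℕ (MeasurableSpace.pi (X := fun _ : ℕ => S)) :=
  Filtration.piLE

theorem measurable_pathFiltration_apply [MeasurableSpace S] {m n : ℕ} (hmn : m ≤ n) :
    Measurable[pathFiltration S n] fun ρ : ℕ → S => ρ m := fun A hA =>
  ⟨(fun f : Set.Iic n → S => f ⟨m, hmn⟩) ⁻¹' A, measurable_pi_apply _ hA, rfl⟩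

theorem measurableSet_pathFiltration_eq [MeasurableSpace S] [DiscreteMeasurableSpace S] {m n : ℕ}
    (hmn : m ≤ n) (s : S) : MeasurableSet[pathFiltration S n] {ρ : ℕ → S | ρ m = s} :=
  measurable_pathFiltration_apply hmn (.singleton s)

theorem restrictLe_preimage_singleton (π : ℕ → S) (n : ℕ) :
    Preorder.restrictLe (π := fun _ : ℕ => S) n ⁻¹'
        ({Preorder.restrictLe (π := fun _ => S) n π} : Set (Set.Iic n → S)) =
      {ρ : ℕ → S | ∀ i ≤ n, ρ i = π i} := by
  ext ρ
  simp [funext_iff]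

theorem measure_eq_of_forall_cylinder [Countable S] [MeasurableSpace S] [DiscreteMeasurableSpace S]
    {μ ν : Measure (ℕ → S)} {n : ℕ}
    (h : ∀ π : ℕ → S, μ {ρ | ∀ i ≤ n, ρ i = π i} = ν {ρ | ∀ i ≤ n, ρ i = π i})
    {A : Set (ℕ → S)} (hA : MeasurableSet[pathFiltration S n] A) : μ A = ν A := by
  have hr : Measurable (Preorder.restrictLe (π := fun _ : ℕ => S) n) :=
    Preorder.measurable_restrictLe n
  have hmap : μ.map (Preorder.restrictLe n) = ν.map (Preorder.restrictLe n) := by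
    refine Measure.ext_of_singleton fun c => ?_
    obtain ⟨π, rfl⟩ : ∃ π : ℕ → S, Preorder.restrictLe n π = c :=
      ⟨fun i => c ⟨min i n, min_le_right i n⟩,
        funext fun ⟨i, hi⟩ => congrArg c (Subtype.ext (min_eq_left hi))⟩
    simpa only [Measure.map_apply hr (.singleton _), restrictLe_preimage_singleton] using h π
  obtain ⟨C, hC, rfl⟩ := hA
  rw [← Measure.map_apply hr hC, hmap, Measure.map_apply hr hC]

namespace IsMarkovLaw

variable [MeasurableSpace S] {p : S → PMF S} {s₀ : S} {μ : Measure (ℕ → S)}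

theorem measure_cylinder_inter_step (hμ : IsMarkovLaw p s₀ μ) (π : ℕ → S) (n : ℕ) (t : S) :
    μ ({ρ | ∀ i ≤ n, ρ i = π i} ∩ {ρ | ρ (n + 1) = t}) =
      μ {ρ | ∀ i ≤ n, ρ i = π i} * p (π n) t := by
  let σ := Function.update π (n + 1) t
  have hσ : ∀ i ≤ n, σ i = π i := fun i hi => Function.update_of_ne (by omega) t π
  have hσt : σ (n + 1) = t := Function.update_self ..
  have hcyl : {ρ : ℕ → S | ∀ i ≤ n, ρ i = π i} = {ρ | ∀ i ≤ n, ρ i = σ i} :=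
    Set.ext fun ρ => forall₂_congr fun i hi => by rw [hσ i hi]
  have hcyl_succ : {ρ : ℕ → S | ∀ i ≤ n, ρ i = σ i} ∩ {ρ | ρ (n + 1) = t} =
      {ρ | ∀ i ≤ n + 1, ρ i = σ i} := by
    ext ρ
    simp only [Set.mem_inter_iff, Set.mem_ofPred_eq, Nat.le_succ_iff_eq_or_le, forall_eq_or_imp,
      hσt, and_comm]
  rw [hcyl, hcyl_succ, hμ.measure_cylinder, hμ.measure_cylinder, Finset.prod_range_succ, mul_assoc,
    hσ n le_rfl, hσt]

theorem measure_cylinder_ne_zero (hμ : IsMarkovLaw p s₀ μ) {π : ℕ → S} (h0 : π 0 = s₀)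
    (hπ : ∀ i, π (i + 1) ∈ (p (π i)).support) (n : ℕ) : μ {ρ | ∀ i ≤ n, ρ i = π i} ≠ 0 := by
  rw [hμ.measure_cylinder, if_pos h0, one_mul, Finset.prod_ne_zero_iff]
  exact fun i _ => hπ i

variable [DiscreteMeasurableSpace S] [Countable S]

theorem measure_inter_step (hμ : IsMarkovLaw p s₀ μ) {n : ℕ} {A : Set (ℕ → S)}
    (hA : MeasurableSet[pathFiltration S n] A) (u t : S) :
    μ (A ∩ {ρ | ρ n = u ∧ ρ (n + 1) = t}) = μ (A ∩ {ρ | ρ n = u}) * p u t := by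
  have hu : MeasurableSet {ρ : ℕ → S | ρ n = u} :=
    (pathFiltration S).le n _ (measurableSet_pathFiltration_eq le_rfl u)
  have ht : MeasurableSet {ρ : ℕ → S | ρ (n + 1) = t} :=
    (pathFiltration S).le (n + 1) _ (measurableSet_pathFiltration_eq le_rfl t)
  have hut : MeasurableSet {ρ : ℕ → S | ρ n = u ∧ ρ (n + 1) = t} := hu.inter ht
  have h := measure_eq_of_forall_cylinder (μ := μ.restrict {ρ | ρ n = u ∧ ρ (n + 1) = t})
    (ν := p u t • μ.restrict {ρ | ρ n = u}) (fun π => ?_) hA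
  · rwa [Measure.smul_apply, Measure.restrict_apply' hut, Measure.restrict_apply' hu, smul_eq_mul,
      mul_comm] at h
  rw [Measure.smul_apply, Measure.restrict_apply' hut, Measure.restrict_apply' hu, smul_eq_mul,
    mul_comm]
  by_cases hπ : π n = u
  · have hsub : {ρ : ℕ → S | ∀ i ≤ n, ρ i = π i} ⊆ {ρ | ρ n = u} := fun ρ hρ => hπ ▸ hρ n le_rfl
    have hinter := hμ.measure_cylinder_inter_step π n t
    rwa [hπ, ← Set.inter_eq_left.2 hsub, Set.inter_assoc] at hinter
  · have hdisj : Disjoint {ρ : ℕ → S | ∀ i ≤ n, ρ i = π i} {ρ | ρ n = u} :=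
      Set.disjoint_left.2 fun ρ hρ hn => hπ ((hρ n le_rfl).symm.trans hn)
    rw [hdisj.inter_eq, (hdisj.mono_right fun ρ hρ => hρ.1).inter_eq, measure_empty, zero_mul]

theorem ae_mem_support (hμ : IsMarkovLaw p s₀ μ) : ∀ᵐ ρ ∂μ, ∀ n, ρ (n + 1) ∈ (p (ρ n)).support := by
  have hpair : ∀ n u t, t ∉ (p u).support → ∀ᵐ ρ ∂μ, ¬(ρ n = u ∧ ρ (n + 1) = t) := by
    intro n u t ht
    have h := hμ.measure_inter_step (n := n) .univ u t
    rw [Set.univ_inter, Set.univ_inter, (PMF.apply_eq_zero_iff _ _).2 ht, mul_zero] at h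
    exact measure_eq_zero_iff_ae_notMem.1 h
  simp only [← ae_all_iff] at hpair
  filter_upwards [hpair] with ρ hρ n
  exact not_not.1 fun hn => hρ n _ _ hn ⟨rfl, rfl⟩

theorem condExp_step (hμ : IsMarkovLaw p s₀ μ) {n : ℕ} {A : Set (ℕ → S)}
    (hA : MeasurableSet[pathFiltration S n] A) (u t : S) :
    μ[(A ∩ {ρ | ρ n = u ∧ ρ (n + 1) = t}).indicator 1 | pathFiltration S n] =ᵐ[μ]
      (A ∩ {ρ | ρ n = u}).indicator fun _ => (p u t).toReal := by
  have := hμ.isProbabilityMeasure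
  have hle := (pathFiltration S).le n
  have hu : MeasurableSet[pathFiltration S n] {ρ : ℕ → S | ρ n = u} :=
    measurableSet_pathFiltration_eq le_rfl u
  have hAu : MeasurableSet[pathFiltration S n] (A ∩ {ρ | ρ n = u}) := hA.inter hu
  have hstep : MeasurableSet (A ∩ {ρ | ρ n = u ∧ ρ (n + 1) = t}) :=
    (hle _ hA).inter <| (hle _ hu).inter <|
      (pathFiltration S).le (n + 1) _ (measurableSet_pathFiltration_eq le_rfl t)
  refine (ae_eq_condExp_of_forall_setIntegral_eq hle ((integrable_const 1).indicator hstep)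
    (fun D _ _ => ((integrable_const _).indicator (hle _ hAu)).integrableOn) (fun D hD _ => ?_)
    (stronglyMeasurable_const.indicator hAu).aestronglyMeasurable).symm
  have h := hμ.measure_inter_step (hD.inter hA) u t
  rw [setIntegral_indicator (hle _ hAu), setIntegral_indicator hstep]
  simp only [Pi.one_apply, setIntegral_const, smul_eq_mul, mul_one, measureReal_def,
    ← Set.inter_assoc, h, ENNReal.toReal_mul]

-- Lévy's conditional Borel–Cantelli lemma: whenever `A n` and `ρ n = u` hold, the step to `t` has
-- conditional probability `p u t > 0` given the past, so these probabilities have infinite sum.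
theorem ae_frequently_step (hμ : IsMarkovLaw p s₀ μ) {A : ℕ → Set (ℕ → S)}
    (hA : ∀ n, MeasurableSet[pathFiltration S n] (A n)) {u t : S}
    (ht : t ∈ (p u).support) :
    ∀ᵐ ρ ∂μ, (∃ᶠ n in atTop, ρ ∈ A n ∧ ρ n = u) →
      ∃ᶠ n in atTop, ρ ∈ A n ∧ ρ n = u ∧ ρ (n + 1) = t := by
  have := hμ.isProbabilityMeasure
  have hpos : 0 < (p u t).toReal := ENNReal.toReal_pos ht (PMF.apply_ne_top _ _)
  let E : ℕ → Set (ℕ → S) := fun n => A (n - 1) ∩ {ρ | ρ (n - 1) = u ∧ ρ n = t}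
  have hE : ∀ n, MeasurableSet[pathFiltration S n] (E n) := fun n =>
    ((pathFiltration S).mono (n.sub_le 1) _ (hA _)).inter
      ((measurableSet_pathFiltration_eq (n.sub_le 1) u).inter
        (measurableSet_pathFiltration_eq le_rfl t))
  filter_upwards [ae_mem_limsup_atTop_iff μ hE,
    ae_all_iff.2 fun n => hμ.condExp_step (hA n) u t] with ρ hlevy hcond hfreq
  have hdiv : ρ ∈ limsup (fun n => A n ∩ {ρ | ρ n = u}) atTop :=
    mem_limsup_iff_frequently_mem.2 hfreq
  rw [Set.limsup_eq_tendsto_sum_indicator_atTop hpos] at hdiv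
  have hlim : ρ ∈ limsup E atTop :=
    hlevy.2 (by simpa only [E, Nat.add_sub_cancel, hcond, Set.mem_ofPred_eq] using hdiv)
  rw [← limsup_nat_add E 1] at hlim
  exact mem_limsup_iff_frequently_mem.1 hlim

theorem ae_frequently_extend (hμ : IsMarkovLaw p s₀ μ) {k : ℕ} (c : Fin k → S) {u t : S}
    (ht : t ∈ (p u).support) :
    ∀ᵐ ρ ∂μ, (∃ᶠ n in atTop, (∀ j : Fin k, ρ (n + j) = c j) ∧ ρ (n + k) = u) →
      ∃ᶠ n in atTop, (∀ j : Fin k, ρ (n + j) = c j) ∧ ρ (n + k) = u ∧ ρ (n + k + 1) = t := by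
  -- The index `m - (k - j)` never exceeds `m`, even if `m < k`, so the event is known at time `m`.
  have hA : ∀ m, MeasurableSet[pathFiltration S m]
      {ρ : ℕ → S | ∀ j : Fin k, ρ (m - (k - j)) = c j} := fun m => by
    simp only [Set.ofPred_forall]
    exact .iInter fun j => measurableSet_pathFiltration_eq (m.sub_le _) (c j)
  have hiff : ∀ (ρ : ℕ → S) (n : ℕ), ρ ∈ {ρ : ℕ → S | ∀ j : Fin k, ρ (n + k - (k - j)) = c j} ↔
      ∀ j : Fin k, ρ (n + j) = c j := fun ρ n =>
    forall_congr' fun j => by rw [Nat.add_sub_assoc (Nat.sub_le _ _), Nat.sub_sub_self j.2.le]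
  filter_upwards [hμ.ae_frequently_step hA ht] with ρ hρ hfreq
  simp only [← hiff] at hfreq ⊢
  rw [← map_add_atTop_eq_nat k] at hρ
  exact hρ hfreq

theorem ae_isFair (hμ : IsMarkovLaw p s₀ μ) {L : LTS S AP}
    (hp : ∀ s, (p s).support = {t | L.T s t}) : ∀ᵐ ρ ∂μ, IsFair L ρ := by
  have hext : ∀ (k : ℕ) (c : Fin k → S) (u t : S), L.T u t → ∀ᵐ ρ ∂μ,
      (∃ᶠ n in atTop, (∀ j : Fin k, ρ (n + j) = c j) ∧ ρ (n + k) = u) →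
        ∃ᶠ n in atTop, (∀ j : Fin k, ρ (n + j) = c j) ∧ ρ (n + k) = u ∧ ρ (n + k + 1) = t :=
    fun k c u t ht => hμ.ae_frequently_extend c (hp u ▸ ht)
  simp only [← ae_all_iff] at hext
  filter_upwards [hext] with ρ hρ π hπ h0 k
  induction k with
  | zero => simpa [infSet] using h0
  | succ k ih =>
    have hprefix : ∃ᶠ n in atTop, (∀ j : Fin k, ρ (n + j) = π j) ∧ ρ (n + k) = π k :=
      ih.mono fun n hn => ⟨fun j => hn j j.2.le, hn k le_rfl⟩
    refine (hρ k _ _ _ (hπ k) hprefix).mono fun n ⟨hlt, hk, hsucc⟩ j hj => ?_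
    obtain rfl | rfl | hjk : j = k + 1 ∨ j = k ∨ j < k := by omega
    exacts [hsucc, hk, hlt ⟨j, hjk⟩]

end IsMarkovLaw

/-! ### The fair-coin measure -/

/-- The uniform distribution on the successors of `s`, the fair-coin step as a `PMF`, whose
masses are the `stepProb L s t`. -/
noncomputable def succPMF [Finite S] (L : LTS S AP) (s : S) : PMF S :=
  PMF.uniformOfFinset (Set.toFinite {t | L.T s t}).toFinset <| by
    simpa [Set.Nonempty] using L.succ_nonempty s

theorem support_succPMF [Finite S] (L : LTS S AP) (s : S) :
    (succPMF L s).support = {t | L.T s t} := by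
  simp [succPMF]

theorem succPMF_apply [Finite S] (L : LTS S AP) (s t : S) : succPMF L s t = stepProb L s t := by
  simp only [succPMF, stepProb, PMF.uniformOfFinset_apply, Set.Finite.mem_toFinset,
    Set.mem_ofPred_eq, ← Set.ncard_eq_toFinset_card]
  rfl

theorem chainProb_map_range (L : LTS S AP) (π : ℕ → S) (n : ℕ) :
    chainProb L ((List.range (n + 1)).map π) =
      ∏ i ∈ Finset.range n, stepProb L (π i) (π (i + 1)) := by
  induction n generalizing π with
  | zero => rfl
  | succ n ih =>
    have h := ih (π ∘ Nat.succ)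
    rw [Finset.prod_range_succ', mul_comm]
    simp only [List.range_succ_eq_map, List.map_cons, List.map_map, chainProb] at h ⊢
    exact congrArg _ h

theorem cyl_map_range (π : ℕ → S) (n : ℕ) :
    Cyl ((List.range (n + 1)).map π) = {ρ | ∀ i ≤ n, ρ i = π i} := by
  ext ρ
  simp [Cyl, Fin.forall_iff]

theorem IsFairMeasure.isMarkovLaw [Finite S] [MeasurableSpace S] {L : LTS S AP}
    {μ : Measure (ℕ → S)} (hμ : IsFairMeasure L μ) : IsMarkovLaw (succPMF L) L.init μ where
  isProbabilityMeasure := hμ.1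
  measure_cylinder π n := by
    rw [← cyl_map_range, hμ.2 _ (by simp), pathProb, chainProb_map_range]
    simp [succPMF_apply, List.range_succ_eq_map]

theorem fair_mc_characterization_general [Finite S] [MeasurableSpace S] [DiscreteMeasurableSpace S]
    (L : LTS S AP) (hreach : ∀ s : S, Reachable L L.init s) {φ : PM AP} (hφ : Positive φ)
    {p : S → PMF S} (hp : ∀ s, (p s).support = {t | L.T s t}) {μ : Measure (ℕ → S)}
    (hμ : IsMarkovLaw p L.init μ) {K : ℕ} (hK : Nat.card S ≤ K + 1) :
    (∃ k : ℕ, μ {ρ : ℕ → S | SatF L φ ρ k} = 1) ↔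
      ∀ B : Set S, IsBSCC L B → ∀ π : ℕ → S, IsRun L π → π 0 ∈ B → Sat L φ π K := by
  have := hμ.isProbabilityMeasure
  have hrun : ∀ᵐ ρ ∂μ, IsRun L ρ := hμ.ae_mem_support.mono fun ρ h n => (hp (ρ n)).le (h n)
  have hfair : ∀ᵐ ρ ∂μ, IsFair L ρ := hμ.ae_isFair hp
  simp only [← ae_iff_prob_eq_one (measurable_satF L φ _)]
  constructor
  · rintro ⟨k, hk⟩ B hB π hπ hπB
    obtain ⟨σ, n, hσ, h0, hn⟩ := (hreach (π 0)).exists_isRun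
    have hcyl : ∃ᵐ ρ ∂μ, ∀ i ≤ n, ρ i = σ i :=
      frequently_ae_iff.2 <| hμ.measure_cylinder_ne_zero h0 (fun i => (hp (σ i)).ge (hσ i)) n
    obtain ⟨ρ, hρσ, hsat, hρ, hf⟩ := (hcyl.and_eventually (hk.and (hrun.and hfair))).exists
    have hρB : ρ n ∈ B := by rwa [hρσ n le_rfl, hn]
    exact hφ.sat_of_satF hρ hf hsat hB hρB hπ hπB hK
  · intro h
    exact ⟨K, by filter_upwards [hrun, hfair] with ρ hρ hf using hf.satF hρ h⟩

/-- **fair model checking characterization for initialized formulas.**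
Let every state of `L` be reachable from the initial state, `φ ∈ L⁺(F_p^∞)` and `μ`
the fair-coin measure of `L`. Then there is `k` with `μ {ρ : (ρ,k) ⊨ F φ} = 1` iff
for every BSCC `B` of `L`, every run starting in `B` satisfies `(ρ, |S|+1) ⊨ φ`. -/
theorem fair_mc_characterization [Fintype S] [MeasurableSpace S] [DiscreteMeasurableSpace S]
    (L : LTS S AP) (hreach : ∀ s : S, Reachable L L.init s)
    (φ : PM AP) (hφ : Positive φ) (μ : Measure (ℕ → S)) (hμ : IsFairMeasure L μ) :
    (∃ k : ℕ, μ {ρ : ℕ → S | SatF L φ ρ k} = 1) ↔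
    (∀ B : Set S, IsBSCC L B → ∀ ρ : ℕ → S, IsRun L ρ → ρ 0 ∈ B →
      Sat L φ ρ (Fintype.card S + 1)) :=
  fair_mc_characterization_general L hreach hφ (support_succPMF L) hμ.isMarkovLaw <| by
    rw [Nat.card_eq_fintype_card]; omega
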